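/- Under the feature and core-state assumptions, define for each state s: J*_ALP(s) := min { φ_sᵀθ : θ ∈ ℝ^d, Φθ ≥ v* } and J*_LRA(s) := min { φ_sᵀθ : θ ∈ ℝ^d, W*EΦθ ≥ W*E v* }. Then max_{s∈𝒮} |J*_ALP(s) − J*_LRA(s)| ≤ 2·ε_approx. -/

import Mathlib

open scoped BigOperators

namespace MDPPlan

variable {S A : Type} [Fintype S] [Fintype A] [DecidableEq S] {d m : ℕ}

/-- `φ_sᵀθ`: dot product of the feature vector of state `s` with weights `θ`. -/
noncomputable def phiDot (Φ : S → Fin d → ℝ) (θ : Fin d → ℝ) (s : S) : ℝ :=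
  ∑ j, Φ s j * θ j

/-- The sequence `𝒮₊ = (s₀, s₁, …, s_m)`: `none` is the planning state `s₀`,
`some i` is the `i`-th core state. -/
def splus (s₀ : S) (c : Fin m → S) : Option (Fin m) → S := fun o => o.elim s₀ c

/-- State-transition matrix `P_π` of a stationary policy `π`. -/
noncomputable def Ppi (P : S → A → S → ℝ) (π : S → A → ℝ) : Matrix S S ℝ :=
  Matrix.of fun s s' => ∑ a, π s a * P s a s'

/-- Expected reward `r_π` of a stationary policy `π`. -/
noncomputable def rpi (r : S → A → ℝ) (π : S → A → ℝ) : S → ℝ :=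
  fun s => ∑ a, π s a * r s a

/-- `π` is a stationary policy: each `π(·|s)` is a probability distribution over actions. -/
def IsPolicy (π : S → A → ℝ) : Prop := (∀ s a, 0 ≤ π s a) ∧ ∀ s, ∑ a, π s a = 1

/-- Value function `v_π = Σ_{t≥0} (γ P_π)^t r_π`. -/
noncomputable def vpi (γ : ℝ) (P : S → A → S → ℝ) (r : S → A → ℝ) (π : S → A → ℝ) :
    S → ℝ :=
  ∑' t : ℕ, ((γ • Ppi P π) ^ t).mulVec (rpi r π)

/-- Optimal value function `v*(s) = sup_π v_π(s)`. -/
noncomputable def vstar (γ : ℝ) (P : S → A → S → ℝ) (r : S → A → ℝ) : S → ℝ :=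
  fun s => ⨆ π : {π : S → A → ℝ // IsPolicy π}, vpi γ P r π.1 s

/-- Optimal action-value function `q*(s,a) = r_{sa} + γ P_{sa} v*`. -/
noncomputable def qstar (γ : ℝ) (P : S → A → S → ℝ) (r : S → A → ℝ) (s : S) (a : A) : ℝ :=
  r s a + γ * ∑ s', P s a s' * vstar γ P r s'

/-- `ε_approx = inf_θ max_s |v*(s) − φ_sᵀθ|`. -/
noncomputable def epsApprox (Φ : S → Fin d → ℝ) (v : S → ℝ) : ℝ :=
  ⨅ θ : Fin d → ℝ, ⨆ s : S, |v s - phiDot Φ θ s|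

/-- Membership in `Λ`: nonnegative and the `s₀`-block sums to one. -/
def InLambda (lam : Option (Fin m) × A → ℝ) : Prop :=
  (∀ p, 0 ≤ lam p) ∧ ∑ a, lam (none, a) = 1

/-- The CoreLP equality constraint `φ_{s₀}ᵀ + λᵀW(γP − E)Φ = 0ᵀ`. -/
def CoreLPConstraint (γ : ℝ) (P : S → A → S → ℝ) (Φ : S → Fin d → ℝ) (s₀ : S)
    (c : Fin m → S) (lam : Option (Fin m) × A → ℝ) : Prop :=
  ∀ j : Fin d, Φ s₀ j + ∑ p : Option (Fin m) × A,
    lam p * (γ * (∑ s', P (splus s₀ c p.1) p.2 s' * Φ s' j) - Φ (splus s₀ c p.1) j) = 0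

/-- The CoreLP objective `λᵀWr`. -/
noncomputable def CoreLPObj (r : S → A → ℝ) (s₀ : S) (c : Fin m → S)
    (lam : Option (Fin m) × A → ℝ) : ℝ :=
  ∑ p : Option (Fin m) × A, lam p * r (splus s₀ c p.1) p.2

/-- The optimal value `V†` of CoreLP. -/
noncomputable def Vdagger (γ : ℝ) (P : S → A → S → ℝ) (r : S → A → ℝ)
    (Φ : S → Fin d → ℝ) (s₀ : S) (c : Fin m → S) : ℝ :=
  sSup {x : ℝ | ∃ lam : Option (Fin m) × A → ℝ,
    InLambda lam ∧ CoreLPConstraint γ P Φ s₀ c lam ∧ x = CoreLPObj r s₀ c lam}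

/-- Feasibility for LRALP: `W*r + W*(γP − E)Φθ ≤ 0`. -/
def LRALPFeasible (γ : ℝ) (P : S → A → S → ℝ) (r : S → A → ℝ) (Φ : S → Fin d → ℝ)
    (c : Fin m → S) (θ : Fin d → ℝ) : Prop :=
  ∀ (i : Fin m) (a : A),
    r (c i) a + (γ * (∑ s', P (c i) a s' * phiDot Φ θ s') - phiDot Φ θ (c i)) ≤ 0

/-- `V_LRALP(μ) = min { μᵀΦθ : θ feasible for LRALP }`. -/
noncomputable def VLRALP (γ : ℝ) (P : S → A → S → ℝ) (r : S → A → ℝ) (Φ : S → Fin d → ℝ)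
    (c : Fin m → S) (μ : S → ℝ) : ℝ :=
  sInf {x : ℝ | ∃ θ : Fin d → ℝ, LRALPFeasible γ P r Φ c θ ∧ x = ∑ s, μ s * phiDot Φ θ s}

/-- The Saddle CoreLP objective `f(λ,θ) = λᵀWr + φ_{s₀}ᵀθ + λᵀW(γP − E)Φθ`. -/
noncomputable def fObj (γ : ℝ) (P : S → A → S → ℝ) (r : S → A → ℝ) (Φ : S → Fin d → ℝ)
    (s₀ : S) (c : Fin m → S) (lam : Option (Fin m) × A → ℝ) (θ : Fin d → ℝ) : ℝ :=
  CoreLPObj r s₀ c lam + phiDot Φ θ s₀ +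
    ∑ p : Option (Fin m) × A,
      lam p * (γ * (∑ s', P (splus s₀ c p.1) p.2 s' * phiDot Φ θ s') -
        phiDot Φ θ (splus s₀ c p.1))

/-- The Saddle LRALP objective `g_μ(λ*,θ) = λ*ᵀW*r + μᵀΦθ + λ*ᵀW*(γP − E)Φθ`. -/
noncomputable def gObj (γ : ℝ) (P : S → A → S → ℝ) (r : S → A → ℝ) (Φ : S → Fin d → ℝ)
    (c : Fin m → S) (μ : S → ℝ) (lamS : Fin m × A → ℝ) (θ : Fin d → ℝ) : ℝ :=
  (∑ p : Fin m × A, lamS p * r (c p.1) p.2) + (∑ s, μ s * phiDot Φ θ s) +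
    ∑ p : Fin m × A,
      lamS p * (γ * (∑ s', P (c p.1) p.2 s' * phiDot Φ θ s') - phiDot Φ θ (c p.1))

/-- The `𝓑`-bounded duality gap `δ_𝓑(λ̂,θ̂) = max_{λ∈Λ_γ} f(λ,θ̂) − inf_{θ∈𝓑} f(λ̂,θ)`. -/
noncomputable def dualityGap (γ : ℝ) (P : S → A → S → ℝ) (r : S → A → ℝ)
    (Φ : S → Fin d → ℝ) (s₀ : S) (c : Fin m → S) (Bset : Set (Fin d → ℝ))
    (lamHat : Option (Fin m) × A → ℝ) (θHat : Fin d → ℝ) : ℝ :=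
  sSup {x : ℝ | ∃ lam : Option (Fin m) × A → ℝ,
      InLambda lam ∧ (∑ p, |lam p|) = 1 / (1 - γ) ∧ x = fObj γ P r Φ s₀ c lam θHat} -
    sInf {x : ℝ | ∃ θ ∈ Bset, x = fObj γ P r Φ s₀ c lamHat θ}

/-!
The core states enter only through the following property of the space of approximants `L θ`: an
approximant that is nonnegative at the core states is nonnegative everywhere. Suppose `L θ₀` is
uniformly within `ε` of `v`. If `L θ` dominates `v` at the core states, then it also dominates
`L θ₀ - ε` there; as constants are approximants, this inequality spreads to all states, so that
`L θ ≥ v - 2 * ε`. Hence raising `L θ` by `2 * ε` makes it feasible for the program with all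
constraints, whose value thus exceeds that of the relaxed program by at most `2 * ε`.
-/

section Majorants

variable {X ι Θ : Type*} [AddCommGroup Θ] [Module ℝ Θ] {L : Θ →ₗ[ℝ] X → ℝ} {c : ι → X}
  {v : X → ℝ} {x : X} {θ₀ θ η : Θ} {b t ε : ℝ}

/-- The optimal value of the linear program that minimises `L θ x` over all `θ` such that `L θ`
dominates `v` at the points `c i`. With `L θ = Φθ`, taking `c = id` gives `J*_ALP(x)`, while taking
for `c` the enumeration of the core states gives `J*_LRA(x)`. As an `sInf` in `ℝ`, it is `0` for an
infeasible or unbounded program. -/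
noncomputable def minMajorant (L : Θ →ₗ[ℝ] X → ℝ) (c : ι → X) (v : X → ℝ) (x : X) : ℝ :=
  sInf {y : ℝ | ∃ θ, (∀ i, v (c i) ≤ L θ (c i)) ∧ y = L θ x}

/-- The points `c i` form a core for the approximants `L θ`: nonnegativity at these points implies
nonnegativity everywhere. For `L θ = Φθ` this is the dual form of the requirement that every row
of `Φ` is a nonnegative combination of the rows with index `c i`. -/
def IsCore (L : Θ →ₗ[ℝ] X → ℝ) (c : ι → X) : Prop :=
  ∀ θ, (∀ i, 0 ≤ L θ (c i)) → ∀ x, 0 ≤ L θ x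

theorem isCore_mulVecLin {n : Type*} [Fintype n] [Fintype ι] {Φ : Matrix X n ℝ} {Z : Matrix X ι ℝ}
    (hZ : ∀ x i, 0 ≤ Z x i) (hΦ : Φ = Z * Φ.submatrix c id) : IsCore Φ.mulVecLin c := by
  intro θ hθ x
  rw [Matrix.mulVecLin_apply, hΦ, ← Matrix.mulVec_mulVec]
  exact dotProduct_nonneg_of_nonneg (hZ x) hθ

theorem minMajorant_le (hb : ∀ θ, (∀ i, v (c i) ≤ L θ (c i)) → b ≤ L θ x)
    (hθ : ∀ i, v (c i) ≤ L θ (c i)) : minMajorant L c v x ≤ L θ x := by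
  refine csInf_le ⟨b, ?_⟩ ⟨θ, hθ, rfl⟩
  rintro _ ⟨θ', hθ', rfl⟩
  exact hb θ' hθ'

theorem le_minMajorant (hθ : ∀ i, v (c i) ≤ L θ (c i))
    (hb : ∀ θ, (∀ i, v (c i) ≤ L θ (c i)) → b ≤ L θ x) : b ≤ minMajorant L c v x := by
  refine le_csInf ⟨L θ x, θ, hθ, rfl⟩ ?_
  rintro _ ⟨θ', hθ', rfl⟩
  exact hb θ' hθ'

theorem map_add_smul_apply_of_map_eq_one (hη : L η = 1) (θ : Θ) (t : ℝ) (x : X) :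
    L (θ + t • η) x = L θ x + t := by
  simp [hη]

theorem le_map_add_smul_of_sub_le (hη : L η = 1) (h : ∀ x, v x - t ≤ L θ x) (x : X) :
    v x ≤ L (θ + t • η) x := by
  rw [map_add_smul_apply_of_map_eq_one hη]
  exact sub_le_iff_le_add.1 (h x)

theorem IsCore.map_sub_le_map (hc : IsCore L c) (hη : L η = 1)
    (h : ∀ i, L θ₀ (c i) - t ≤ L θ (c i)) (x : X) : L θ₀ x - t ≤ L θ x := by
  have hdiff : ∀ y, L (θ - θ₀ + t • η) y = L θ y - (L θ₀ y - t) := fun y => by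
    rw [map_add_smul_apply_of_map_eq_one hη, map_sub, Pi.sub_apply]
    ring
  have hnonneg := hc (θ - θ₀ + t • η) (fun i => (hdiff (c i)).symm ▸ sub_nonneg.2 (h i)) x
  rwa [hdiff, sub_nonneg] at hnonneg

theorem IsCore.sub_two_mul_le_map (hc : IsCore L c) (hη : L η = 1)
    (happrox : ∀ x, |v x - L θ₀ x| ≤ ε) (hθ : ∀ i, v (c i) ≤ L θ (c i)) (x : X) :
    v x - 2 * ε ≤ L θ x := by
  have hcore : ∀ i, L θ₀ (c i) - ε ≤ L θ (c i) := fun i => by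
    linarith [hθ i, (abs_le.1 (happrox (c i))).1]
  linarith [hc.map_sub_le_map hη hcore x, (abs_le.1 (happrox x)).2]

theorem IsCore.abs_minMajorant_id_sub_minMajorant_le (hc : IsCore L c) (hη : L η = 1)
    (happrox : ∀ x, |v x - L θ₀ x| ≤ ε) (x : X) :
    |minMajorant L id v x - minMajorant L c v x| ≤ 2 * ε := by
  have hfeasible : ∀ y, v y ≤ L (θ₀ + ε • η) y :=
    le_map_add_smul_of_sub_le hη fun y => sub_le_comm.1 (abs_le.1 (happrox y)).2
  have hε : 0 ≤ ε := (abs_nonneg _).trans (happrox x)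
  have hrelax : minMajorant L c v x ≤ minMajorant L id v x :=
    le_minMajorant hfeasible fun θ hθ =>
      minMajorant_le (fun θ' hθ' => hc.sub_two_mul_le_map hη happrox hθ' x) fun i => hθ (c i)
  have hlift : minMajorant L id v x - 2 * ε ≤ minMajorant L c v x := by
    refine le_minMajorant (fun i => hfeasible (c i)) fun θ hθ => ?_
    rw [sub_le_iff_le_add, ← map_add_smul_apply_of_map_eq_one hη]
    exact minMajorant_le (fun θ' hθ' => hθ' x)
      (le_map_add_smul_of_sub_le hη (hc.sub_two_mul_le_map hη happrox hθ))
  rw [abs_le]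
  constructor <;> linarith

theorem jalp_jlra_close_general [Finite X] (hone : ∃ η, L η = 1) (hc : IsCore L c)
    (v : X → ℝ) (x : X) :
    |minMajorant L id v x - minMajorant L c v x| ≤ 2 * ⨅ θ, ⨆ y, |v y - L θ y| := by
  obtain ⟨η, hη⟩ := hone
  rw [Real.mul_iInf_of_nonneg zero_le_two]
  exact le_ciInf fun θ₀ =>
    hc.abs_minMajorant_id_sub_minMajorant_le hη (le_ciSup (Set.finite_range _).bddAbove) x

end Majorants

/-- `max_s |J*_ALP(s) − J*_LRA(s)| ≤ 2 ε_approx`. -/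
theorem jalp_jlra_close
    {S A : Type} [Fintype S] [Fintype A] [DecidableEq S] [Nonempty S] [Nonempty A]
    {d m : ℕ} (γ : ℝ) (hγ0 : 0 ≤ γ) (hγ1 : γ < 1)
    (P : S → A → S → ℝ) (hP0 : ∀ s a s', 0 ≤ P s a s')
    (hP1 : ∀ s a, ∑ s', P s a s' = 1)
    (r : S → A → ℝ)
    (Φ : S → Fin d → ℝ) (hfeat : ∃ η : Fin d → ℝ, ∀ s, phiDot Φ η s = 1)
    (c : Fin m → S) (hc : Function.Injective c)
    (hcore : ∃ Z : S → Fin m → ℝ, (∀ s i, 0 ≤ Z s i) ∧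
      ∀ s j, Φ s j = ∑ i, Z s i * Φ (c i) j) :
    ∀ s : S,
      |sInf {x : ℝ | ∃ θ : Fin d → ℝ,
          (∀ s' : S, vstar γ P r s' ≤ phiDot Φ θ s') ∧ x = phiDot Φ θ s} -
        sInf {x : ℝ | ∃ θ : Fin d → ℝ,
          (∀ (i : Fin m) (_ : A), vstar γ P r (c i) ≤ phiDot Φ θ (c i)) ∧
            x = phiDot Φ θ s}| ≤
      2 * epsApprox Φ (vstar γ P r) := by
  obtain ⟨Z, hZ, hΦ⟩ := hcore
  simp only [forall_const]
  -- Closes by definitional unfolding, since `phiDot Φ θ` is `Φ *ᵥ θ` by `rfl`.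
  exact jalp_jlra_close_general (hfeat.imp fun _ => funext)
    (isCore_mulVecLin (Φ := Matrix.of Φ) hZ (Matrix.ext hΦ)) (vstar γ P r)

end MDPPlan
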